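/- For every dimension d ≥ 1 and every α > 0 there is a constant C = C(d, α) ≥ 1 such that for every continuous function b : ℝ^d → ℂ one has C⁻¹ · sup_I ℓ(I)^{−α} |I|⁻¹ ∫_I |b − ⟨b⟩_I| ≤ ‖b‖_{Ċ^{0,α}} ≤ C · sup_I ℓ(I)^{−α} |I|⁻¹ ∫_I |b − ⟨b⟩_I|, where the suprema are taken over all cubes I ⊂ ℝ^d and both sides may equal +∞. -/

import Mathlib

/-!
Write `osc I` for the normalised oscillation `ℓ(I)^{-α} |I|⁻¹ ∫_I |b - ⟨b⟩_I|`.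

For the lower bound, a cube has diameter at most `d ℓ(I)`, so a function with Hölder constant `H`
differs from its average on `I` by at most `H (d ℓ(I))^α`; integrate over `I`
(`osc_le_of_holder`).

For the upper bound, suppose `osc I ≤ M` for all cubes. If `J ⊆ I` and `ℓ(I) = 2 ℓ(J)`, then
`|⟨b⟩_J - ⟨b⟩_I| ≤ |J|⁻¹ ∫_I |b - ⟨b⟩_I| ≤ 2^d M ℓ(I)^α` (`avg_sub_avg_le`). Summing this geometric
series over the concentric cubes of sides `s 2^{-k}` at `z`, whose averages converge to `b z` by
continuity, gives `|b z - ⟨b⟩_I| ≤ K M s^α` with `K = 2^d / (1 - 2^{-α})` (`sub_avg_le`). Two points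
`x, y` at distance `r` are then compared through the cube of side `4r` centred at `x` and the cube
of side `2r` centred at `y`, which it contains.
-/

open MeasureTheory ENNReal Set

noncomputable section

/-- `Euc d` is the Euclidean space `ℝ^d`. -/
abbrev Euc (d : ℕ) := EuclideanSpace ℝ (Fin d)

/-- An axis-parallel cube in `ℝ^d`, described by its center and positive side length. -/
structure Cube (d : ℕ) where
  center : Euc d
  side : ℝ
  side_pos : 0 < side

/-- The set of points of a cube. -/
def Cube.carrier {d : ℕ} (I : Cube d) : Set (Euc d) :=
  {x | ∀ i, |x i - I.center i| ≤ I.side / 2}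

/-- The average `⟨b⟩_I` of a function over a cube. -/
def cubeAvg {d : ℕ} (b : Euc d → ℂ) (I : Cube d) : ℂ :=
  (volume I.carrier).toReal⁻¹ • ∫ x in I.carrier, b x

/-- The homogeneous Hölder seminorm `‖b‖_{Ċ^{0,α}}`, valued in `[0,∞]`. -/
def holderSeminorm {d : ℕ} (α : ℝ) (b : Euc d → ℂ) : ℝ≥0∞ :=
  ⨆ (x : Euc d) (y : Euc d) (_ : x ≠ y), ENNReal.ofReal (‖b x - b y‖ / dist x y ^ α)
/-- The norm `‖b‖_{∙L^r}` = infimum over constants `c` of the `L^r` norm of `b - c`. -/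
def dotLrNorm {d : ℕ} (r : ℝ) (b : Euc d → ℂ) : ℝ≥0∞ :=
  ⨅ c : ℂ, eLpNorm (fun x => b x - c) (ENNReal.ofReal r) volume

/-- The BMO norm of `b`, valued in `[0,∞]`. -/
def bmoNorm {d : ℕ} (b : Euc d → ℂ) : ℝ≥0∞ :=
  ⨆ I : Cube d, ENNReal.ofReal ((volume I.carrier).toReal⁻¹ * ∫ x in I.carrier, ‖b x - cubeAvg b I‖)

/-- The sharp maximal function `M♯b`. -/
def sharpMaximal {d : ℕ} (b : Euc d → ℂ) (x : Euc d) : ℝ≥0∞ :=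
  ⨆ (I : Cube d) (_ : x ∈ I.carrier),
    ENNReal.ofReal ((volume I.carrier).toReal⁻¹ * ∫ y in I.carrier, ‖b y - cubeAvg b I‖)

/-- A (countable) collection of cubes is sparse if each cube `Q` carries a measurable subset
`E Q` of at least half its measure, these subsets being pairwise disjoint. -/
def IsSparse {d : ℕ} (𝒮 : Set (Cube d)) : Prop :=
  𝒮.Countable ∧ ∃ E : Cube d → Set (Euc d),
    (∀ Q ∈ 𝒮, MeasurableSet (E Q) ∧ E Q ⊆ Q.carrier ∧ volume Q.carrier ≤ 2 * volume (E Q)) ∧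
    𝒮.PairwiseDisjoint E

/-- Average of `b (·, x2)` over a cube in the first factor. -/
def avgFst {d1 d2 : ℕ} (b : Euc d1 × Euc d2 → ℂ) (I1 : Cube d1) (x2 : Euc d2) : ℂ :=
  (volume I1.carrier).toReal⁻¹ • ∫ y1 in I1.carrier, b (y1, x2)

/-- Average of `b (x1, ·)` over a cube in the second factor. -/
def avgSnd {d1 d2 : ℕ} (b : Euc d1 × Euc d2 → ℂ) (I2 : Cube d2) (x1 : Euc d1) : ℂ :=
  (volume I2.carrier).toReal⁻¹ • ∫ y2 in I2.carrier, b (x1, y2)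

/-- Average of `b` over the rectangle `I1 × I2`. -/
def avgRect {d1 d2 : ℕ} (b : Euc d1 × Euc d2 → ℂ) (I1 : Cube d1) (I2 : Cube d2) : ℂ :=
  (volume (I1.carrier ×ˢ I2.carrier)).toReal⁻¹ • ∫ x in I1.carrier ×ˢ I2.carrier, b x

/-- The bi-parameter oscillation `osc^{1,1}(b, I1 × I2)`. -/
def osc11 {d1 d2 : ℕ} (b : Euc d1 × Euc d2 → ℂ) (I1 : Cube d1) (I2 : Cube d2) : ℝ :=
  ∫ x in I1.carrier ×ˢ I2.carrier,
    ‖b x - avgFst b I1 x.2 - avgSnd b I2 x.1 + avgRect b I1 I2‖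

/-- The `L^p` "norm" (with exponent `p ∈ [1,∞]`) of an `ℝ≥0∞`-valued function. -/
def lpNormENN {α : Type*} [MeasurableSpace α] (μ : Measure α) (p : ℝ≥0∞) (g : α → ℝ≥0∞) : ℝ≥0∞ :=
  if p = ∞ then essSup g μ else (∫⁻ x, g x ^ p.toReal ∂μ) ^ (1 / p.toReal)

/-- The mixed norm `‖F‖_{L^{v1}_{x1} L^{v2}_{x2}}`. -/
def mixedNorm {d1 d2 : ℕ} {E : Type*} [NormedAddCommGroup E] (v1 v2 : ℝ≥0∞)
    (F : Euc d1 × Euc d2 → E) : ℝ≥0∞ :=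
  lpNormENN volume v1 (fun x1 => lpNormENN volume v2 (fun x2 => (‖F (x1, x2)‖₊ : ℝ≥0∞)))

/-- The oscillation `osc^{v1,v2}(b, I1 × I2)` with general mixed exponents. -/
def oscMixed {d1 d2 : ℕ} (v1 v2 : ℝ≥0∞) (b : Euc d1 × Euc d2 → ℂ)
    (I1 : Cube d1) (I2 : Cube d2) : ℝ≥0∞ :=
  mixedNorm v1 v2 ((I1.carrier ×ˢ I2.carrier).indicator
    (fun x => b x - avgFst b I1 x.2 - avgSnd b I2 x.1 + avgRect b I1 I2))

/-- A standard Calderón–Zygmund kernel on `ℝ^n` with exponent `α` and constant `CK`. -/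
def IsCZKernel (n : ℕ) (α CK : ℝ) (K : Euc n → Euc n → ℂ) : Prop :=
  (∀ x y : Euc n, x ≠ y → ‖K x y‖ ≤ CK / dist x y ^ (n : ℝ)) ∧
  (∀ x x' y : Euc n, x ≠ y → dist x x' ≤ dist x y / 2 →
    ‖K x y - K x' y‖ + ‖K y x - K y x'‖ ≤ CK * dist x x' ^ α / dist x y ^ ((n : ℝ) + α))

/-- Symmetric non-degeneracy of a kernel with constant `c₀`. -/
def SymNonDeg (n : ℕ) (c₀ : ℝ) (K : Euc n → Euc n → ℂ) : Prop :=
  ∀ (y : Euc n) (r : ℝ), 0 < r → ∃ x : Euc n, r ≤ dist x y ∧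
    1 / (c₀ * r ^ (n : ℝ)) ≤ ‖K x y‖ ∧ 1 / (c₀ * r ^ (n : ℝ)) ≤ ‖K y x‖

/-- Distance between two sets in a metric space. -/
def setDist {α : Type*} [PseudoMetricSpace α] (s t : Set α) : ℝ :=
  sInf (Set.image2 dist s t)

/-- An admissible configuration: the rectangles `J1 × J2` and `L1 × L2` have matching side
lengths in each parameter, and separation comparable to the common side length, with
comparability constants `c1 ≤ c2`. -/
def IsAdmissible {d1 d2 : ℕ} (c1 c2 : ℝ) (J1 L1 : Cube d1) (J2 L2 : Cube d2) : Prop :=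
  J1.side = L1.side ∧ J2.side = L2.side ∧
  c1 * J1.side ≤ setDist J1.carrier L1.carrier ∧ setDist J1.carrier L1.carrier ≤ c2 * J1.side ∧
  c1 * J2.side ≤ setDist J2.carrier L2.carrier ∧ setDist J2.carrier L2.carrier ≤ c2 * J2.side

/-- The difference `B(x,y) = b(x1,x2) − b(x1,y2) − b(y1,x2) + b(y1,y2)`. -/
def biB {d1 d2 : ℕ} (b : Euc d1 × Euc d2 → ℂ) (x y : Euc d1 × Euc d2) : ℂ :=
  b (x.1, x.2) - b (x.1, y.2) - b (y.1, x.2) + b (y.1, y.2)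

/-- The bilinear form `Λ(f1, f2) = ∬ B(x,y) K1(x1,y1) K2(x2,y2) f1(y) f2(x) dy dx`. -/
def biCommForm {d1 d2 : ℕ} (b : Euc d1 × Euc d2 → ℂ) (K1 : Euc d1 → Euc d1 → ℂ)
    (K2 : Euc d2 → Euc d2 → ℂ) (f1 f2 : Euc d1 × Euc d2 → ℂ) : ℂ :=
  ∫ x : Euc d1 × Euc d2, ∫ y : Euc d1 × Euc d2,
    biB b x y * K1 x.1 y.1 * K2 x.2 y.2 * f1 y * f2 x

lemma Cube.carrier_eq {d : ℕ} (I : Cube d) :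
    I.carrier = (MeasurableEquiv.toLp 2 (Fin d → ℝ)).symm ⁻¹'
      (Icc (fun i => I.center i - I.side / 2) (fun i => I.center i + I.side / 2)) := by
  ext x
  simp only [Cube.carrier, mem_ofPred_eq, mem_preimage, mem_Icc, Pi.le_def, ← forall_and]
  refine forall_congr' fun i => ?_
  change _ ↔ I.center i - I.side / 2 ≤ x i ∧ x i ≤ I.center i + I.side / 2
  rw [abs_le]
  constructor <;> rintro ⟨h1, h2⟩ <;> constructor <;> linarith

lemma Cube.volume_carrier {d : ℕ} (I : Cube d) :
    volume I.carrier = ENNReal.ofReal (I.side ^ d) := by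
  rw [I.carrier_eq, (EuclideanSpace.volume_preserving_symm_measurableEquiv_toLp (Fin d)).measure_preimage
    measurableSet_Icc.nullMeasurableSet, Real.volume_Icc_pi]
  simp only [add_sub_sub_cancel, add_halves, Finset.prod_const, Finset.card_univ, Fintype.card_fin]
  rw [ENNReal.ofReal_pow I.side_pos.le]

lemma Cube.toReal_volume {d : ℕ} (I : Cube d) : (volume I.carrier).toReal = I.side ^ d := by
  rw [I.volume_carrier, ENNReal.toReal_ofReal (pow_nonneg I.side_pos.le _)]

lemma Cube.measurableSet {d : ℕ} (I : Cube d) : MeasurableSet I.carrier := by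
  rw [I.carrier_eq]
  exact (MeasurableEquiv.toLp 2 (Fin d → ℝ)).symm.measurable measurableSet_Icc

lemma Cube.dist_le {d : ℕ} (I : Cube d) {x y : Euc d} (hx : x ∈ I.carrier) (hy : y ∈ I.carrier) :
    dist x y ≤ d * I.side := by
  have hs := I.side_pos
  have h : ∀ i, dist (x i) (y i) ≤ I.side := fun i => by
    have h1 := abs_le.1 (hx i)
    have h2 := abs_le.1 (hy i)
    rw [Real.dist_eq, abs_le]
    constructor <;> linarith
  rw [EuclideanSpace.dist_eq]
  refine Real.sqrt_le_iff.2 ⟨by positivity, ?_⟩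
  calc ∑ i, dist (x i) (y i) ^ 2 ≤ ∑ _i : Fin d, I.side ^ 2 :=
        Finset.sum_le_sum fun i _ => pow_le_pow_left₀ dist_nonneg (h i) 2
    _ = d * I.side ^ 2 := by simp
    _ ≤ (d * I.side) ^ 2 := by
        have : (d : ℝ) ≤ (d : ℝ) ^ 2 := by exact_mod_cast Nat.le_self_pow two_ne_zero d
        rw [mul_pow]
        gcongr

lemma Cube.integrableOn {d : ℕ} (I : Cube d) {E : Type*} [NormedAddCommGroup E]
    {f : Euc d → E} (hf : Continuous f) : IntegrableOn f I.carrier := by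
  have hsub : I.carrier ⊆ Metric.closedBall I.center (d * I.side) := fun x hx => by
    refine I.dist_le hx fun i => ?_
    have := I.side_pos
    simp only [sub_self, abs_zero]
    positivity
  exact (hf.continuousOn.integrableOn_compact (isCompact_closedBall _ _)).mono_set hsub

/-- Comparing the average with a constant `c` costs at most the mean of `‖b - c‖`. -/
lemma norm_avg_sub_le {d : ℕ} {b : Euc d → ℂ} (hb : Continuous b) (I : Cube d) (c : ℂ) :
    ‖cubeAvg b I - c‖ ≤ (I.side ^ d)⁻¹ * ∫ x in I.carrier, ‖b x - c‖ := by
  have hv : (0 : ℝ) < I.side ^ d := pow_pos I.side_pos d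
  have h : cubeAvg b I - c = (I.side ^ d)⁻¹ • ∫ x in I.carrier, (b x - c) := by
    rw [integral_sub (I.integrableOn hb) (I.integrableOn continuous_const), setIntegral_const,
      measureReal_def, cubeAvg, I.toReal_volume, smul_sub, smul_smul, inv_mul_cancel₀ hv.ne',
      one_smul]
  rw [h, norm_smul, Real.norm_of_nonneg (inv_nonneg.2 hv.le)]
  gcongr
  exact norm_integral_le_integral_norm _

lemma integral_le_of_le {d : ℕ} {f : Euc d → ℝ} (hf : Continuous f) (I : Cube d) {B : ℝ}
    (h : ∀ x ∈ I.carrier, f x ≤ B) : (I.side ^ d)⁻¹ * ∫ x in I.carrier, f x ≤ B := by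
  have hv : (0 : ℝ) < I.side ^ d := pow_pos I.side_pos d
  have := setIntegral_mono_on (I.integrableOn hf) (I.integrableOn continuous_const)
    I.measurableSet h
  rw [setIntegral_const, measureReal_def, I.toReal_volume, smul_eq_mul] at this
  rw [inv_mul_le_iff₀ hv]
  exact this

lemma osc_le_of_holder {d : ℕ} {α : ℝ} (hα : 0 < α) {b : Euc d → ℂ} (hb : Continuous b) {H : ℝ}
    (hH : 0 ≤ H) (h : ∀ x y, ‖b x - b y‖ ≤ H * dist x y ^ α) (I : Cube d) :
    (I.side ^ α)⁻¹ * (volume I.carrier).toReal⁻¹ * ∫ x in I.carrier, ‖b x - cubeAvg b I‖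
      ≤ (d : ℝ) ^ α * H := by
  have hs := I.side_pos
  have hxy : ∀ x ∈ I.carrier, ∀ y ∈ I.carrier, ‖b x - b y‖ ≤ H * (d * I.side) ^ α :=
    fun x hx y hy => (h x y).trans (by
      gcongr
      exact I.dist_le hx hy)
  have hx : ∀ x ∈ I.carrier, ‖b x - cubeAvg b I‖ ≤ H * (d * I.side) ^ α := fun x hx => by
    rw [norm_sub_rev]
    exact (norm_avg_sub_le hb I (b x)).trans
      (integral_le_of_le (by fun_prop) I fun y hy => hxy y hy x hx)
  have := integral_le_of_le (by fun_prop) I hx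
  rw [mul_assoc, I.toReal_volume, inv_mul_le_iff₀ (by positivity)]
  rw [Real.mul_rpow (by positivity) hs.le] at this
  linarith

/-- Averages over nested cubes with side ratio `2` differ by at most the oscillation of the larger
one, up to the ratio `2^d` of the volumes. -/
lemma avg_sub_avg_le {d : ℕ} {α : ℝ} {b : Euc d → ℂ} (hb : Continuous b) {M : ℝ}
    (hM : ∀ I : Cube d, (I.side ^ d)⁻¹ * ∫ x in I.carrier, ‖b x - cubeAvg b I‖ ≤ M * I.side ^ α)
    (I J : Cube d) (hJI : J.carrier ⊆ I.carrier) (hs : I.side = 2 * J.side) :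
    ‖cubeAvg b J - cubeAvg b I‖ ≤ 2 ^ d * (M * I.side ^ α) := by
  have hJ := J.side_pos
  calc ‖cubeAvg b J - cubeAvg b I‖
      ≤ (J.side ^ d)⁻¹ * ∫ x in J.carrier, ‖b x - cubeAvg b I‖ := norm_avg_sub_le hb J _
    _ ≤ (J.side ^ d)⁻¹ * ∫ x in I.carrier, ‖b x - cubeAvg b I‖ := by
        refine mul_le_mul_of_nonneg_left ?_ (by positivity)
        exact setIntegral_mono_set (I.integrableOn (by fun_prop))
          (Filter.Eventually.of_forall fun x => norm_nonneg _) hJI.eventuallyLE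
    _ = 2 ^ d * ((I.side ^ d)⁻¹ * ∫ x in I.carrier, ‖b x - cubeAvg b I‖) := by
        rw [hs, mul_pow]
        field_simp
    _ ≤ _ := mul_le_mul_of_nonneg_left (hM I) (by positivity)

/-- The cube centred at `z` obtained from side `s` by `k` bisections. -/
def dyadicCube {d : ℕ} (z : Euc d) (s : ℝ) (hs : 0 < s) (k : ℕ) : Cube d :=
  ⟨z, s * (1 / 2) ^ k, by positivity⟩

/-- The value at the centre is close to the average: telescope over the bisected concentric cubes. -/
lemma sub_avg_le {d : ℕ} {α : ℝ} (hα : 0 < α) {b : Euc d → ℂ} (hb : Continuous b) {M : ℝ}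
    (hM0 : 0 ≤ M)
    (hM : ∀ I : Cube d, (I.side ^ d)⁻¹ * ∫ x in I.carrier, ‖b x - cubeAvg b I‖ ≤ M * I.side ^ α)
    (I : Cube d) :
    ‖b I.center - cubeAvg b I‖ ≤ 2 ^ d / (1 - (1 / 2 : ℝ) ^ α) * (M * I.side ^ α) := by
  set q : ℝ := (1 / 2 : ℝ) ^ α with hq
  have hq0 : 0 < q := by positivity
  have hq1 : q < 1 := Real.rpow_lt_one (by norm_num) (by norm_num) hα
  have hs := I.side_pos
  set K : ℝ := 2 ^ d / (1 - q) with hK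
  have hKq : K * (1 - q) = 2 ^ d := div_mul_cancel₀ _ (by linarith)
  have hK0 : 0 ≤ K := div_nonneg (by positivity) (by linarith)
  set Q := dyadicCube I.center I.side hs with hQ
  have hQ0 : Q 0 = I := by simp [hQ, dyadicCube]
  -- Partial sums of the geometric series, in closed form.
  have hk : ∀ k, ‖cubeAvg b (Q k) - cubeAvg b I‖ ≤ K * (1 - q ^ k) * (M * I.side ^ α) := by
    intro k
    induction k with
    | zero => simp [hQ0]
    | succ k ih =>
      have hstep := avg_sub_avg_le (α := α) hb hM (Q k) (Q (k + 1)) (fun x hx i => by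
          refine (hx i).trans ?_
          have : 0 < I.side * (1 / 2) ^ k := by positivity
          simp only [hQ, dyadicCube, pow_succ]
          linarith) (by
          simp only [hQ, dyadicCube, pow_succ]
          ring)
      have hside : (Q k).side ^ α = I.side ^ α * q ^ k := by
        simp only [hQ, dyadicCube]
        rw [Real.mul_rpow hs.le (by positivity), hq, ← Real.rpow_natCast, ← Real.rpow_natCast,
          ← Real.rpow_mul (by norm_num), ← Real.rpow_mul (by norm_num), mul_comm α]
      rw [hside, ← hKq] at hstep
      calc _ ≤ _ := norm_sub_le_norm_sub_add_norm_sub _ (cubeAvg b (Q k)) _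
        _ ≤ _ := add_le_add hstep ih
        _ = _ := by ring
  have hk' : ∀ k, ‖cubeAvg b (Q k) - cubeAvg b I‖ ≤ K * (M * I.side ^ α) := fun k =>
    (hk k).trans (by
      have : 0 ≤ q ^ k := by positivity
      have h2 : 0 ≤ K * (M * I.side ^ α) := by positivity
      nlinarith)
  refine le_of_forall_pos_le_add fun ε hε => ?_
  obtain ⟨δ, hδ, hcont⟩ := Metric.continuous_iff.1 hb I.center ε hε
  obtain ⟨k, hkδ⟩ := exists_pow_lt_of_lt_one (show 0 < δ / (d * I.side + 1) by positivity)
    (show (1 / 2 : ℝ) < 1 by norm_num)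
  rw [lt_div_iff₀ (by positivity)] at hkδ
  have hnear : ‖cubeAvg b (Q k) - b I.center‖ ≤ ε := by
    refine (norm_avg_sub_le hb (Q k) _).trans (integral_le_of_le (by fun_prop) _ fun x hx => ?_)
    have hc : I.center ∈ (Q k).carrier := fun i => by
      have := (Q k).side_pos
      change |I.center i - I.center i| ≤ _
      simp only [sub_self, abs_zero]
      positivity
    have hd := (Q k).dist_le hx hc
    change _ ≤ (d : ℝ) * (I.side * (1 / 2) ^ k) at hd
    have hp : (0 : ℝ) < (1 / 2) ^ k := by positivity
    have := hcont x (by nlinarith)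
    rw [dist_eq_norm] at this
    exact this.le
  calc ‖b I.center - cubeAvg b I‖
      ≤ ‖b I.center - cubeAvg b (Q k)‖ + ‖cubeAvg b (Q k) - cubeAvg b I‖ :=
        norm_sub_le_norm_sub_add_norm_sub _ _ _
    _ ≤ ε + K * (M * I.side ^ α) := add_le_add (by rwa [norm_sub_rev]) (hk' k)
    _ = _ := add_comm _ _

lemma holder_of_osc_le {d : ℕ} {α : ℝ} (hα : 0 < α) {b : Euc d → ℂ} (hb : Continuous b) {M : ℝ}
    (hM0 : 0 ≤ M)
    (hM : ∀ I : Cube d, (I.side ^ d)⁻¹ * ∫ x in I.carrier, ‖b x - cubeAvg b I‖ ≤ M * I.side ^ α)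
    {x y : Euc d} (hxy : x ≠ y) :
    ‖b x - b y‖ ≤
      (2 * (2 ^ d / (1 - (1 / 2 : ℝ) ^ α)) + 2 ^ d) * 4 ^ α * M * dist x y ^ α := by
  have hr : 0 < dist x y := dist_pos.2 hxy
  set r := dist x y with hrdef
  have hq1 : (1 / 2 : ℝ) ^ α < 1 := Real.rpow_lt_one (by norm_num) (by norm_num) hα
  set K : ℝ := 2 ^ d / (1 - (1 / 2 : ℝ) ^ α)
  have hK0 : 0 ≤ K := div_nonneg (by positivity) (by linarith)
  let I : Cube d := ⟨x, 4 * r, by positivity⟩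
  let J : Cube d := ⟨y, 2 * r, by positivity⟩
  have hJI : J.carrier ⊆ I.carrier := fun z hz i => by
    have h1 : |z i - y i| ≤ 2 * r / 2 := hz i
    have h2 : |x i - y i| ≤ r := by
      have := PiLp.norm_apply_le (x - y) i
      rwa [← dist_eq_norm] at this
    change |z i - x i| ≤ 4 * r / 2
    rw [abs_le] at *
    constructor <;> linarith [h1.1, h1.2, h2.1, h2.2]
  have e1 : ‖b x - cubeAvg b I‖ ≤ K * (M * (4 * r) ^ α) := sub_avg_le hα hb hM0 hM I
  have e2 : ‖b y - cubeAvg b J‖ ≤ K * (M * (2 * r) ^ α) := sub_avg_le hα hb hM0 hM J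
  have e3 : ‖cubeAvg b J - cubeAvg b I‖ ≤ 2 ^ d * (M * (4 * r) ^ α) :=
    avg_sub_avg_le hb hM I J hJI (by change 4 * r = 2 * (2 * r); ring)
  have e4 : K * (M * (2 * r) ^ α) ≤ K * (M * (4 * r) ^ α) := by
    gcongr
    norm_num
  have e5 : (4 * r) ^ α = 4 ^ α * r ^ α := Real.mul_rpow (by norm_num) hr.le
  have htri : ‖b x - b y‖ ≤
      ‖b x - cubeAvg b I‖ + ‖cubeAvg b J - cubeAvg b I‖ + ‖b y - cubeAvg b J‖ := by
    have h : b x - b y =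
      (b x - cubeAvg b I) - (cubeAvg b J - cubeAvg b I) - (b y - cubeAvg b J) := by ring
    rw [h]
    exact (norm_sub_le _ _).trans (add_le_add (norm_sub_le _ _) le_rfl)
  calc ‖b x - b y‖ ≤ K * (M * (4 * r) ^ α) + 2 ^ d * (M * (4 * r) ^ α) + K * (M * (4 * r) ^ α) := by
        linarith
    _ = _ := by
        rw [e5]
        ring

theorem statement0 (d : ℕ) (hd : 1 ≤ d) (α : ℝ) (hα : 0 < α) :
    ∃ C : ℝ, 1 ≤ C ∧ ∀ b : Euc d → ℂ, Continuous b →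
      (ENNReal.ofReal C)⁻¹ *
          (⨆ I : Cube d, ENNReal.ofReal
            ((I.side ^ α)⁻¹ * (volume I.carrier).toReal⁻¹ * ∫ x in I.carrier, ‖b x - cubeAvg b I‖))
        ≤ holderSeminorm α b ∧
      holderSeminorm α b ≤ ENNReal.ofReal C *
          (⨆ I : Cube d, ENNReal.ofReal
            ((I.side ^ α)⁻¹ * (volume I.carrier).toReal⁻¹ * ∫ x in I.carrier, ‖b x - cubeAvg b I‖)) := by
  have hq1 : (1 / 2 : ℝ) ^ α < 1 := Real.rpow_lt_one (by norm_num) (by norm_num) hα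
  set A : ℝ := (2 * (2 ^ d / (1 - (1 / 2 : ℝ) ^ α)) + 2 ^ d) * 4 ^ α with hA
  have hA0 : 0 ≤ A := by
    have : 0 ≤ (2 : ℝ) ^ d / (1 - (1 / 2 : ℝ) ^ α) := div_nonneg (by positivity) (by linarith)
    positivity
  have hdα : 0 ≤ (d : ℝ) ^ α := by positivity
  set C : ℝ := 1 + (d : ℝ) ^ α + A with hC
  have hC0 : 0 < C := by positivity
  have hCpos : ENNReal.ofReal C ≠ 0 := by simpa using hC0
  refine ⟨C, by linarith, fun b hb => ⟨?_, ?_⟩⟩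
  · rw [ENNReal.inv_mul_le_iff hCpos ENNReal.ofReal_ne_top]
    by_cases htop : holderSeminorm α b = ∞
    · rw [htop, ENNReal.mul_top hCpos]
      exact le_top
    have hH0 : 0 ≤ (holderSeminorm α b).toReal := ENNReal.toReal_nonneg
    refine iSup_le fun I => ?_
    rw [← ENNReal.ofReal_toReal htop, ← ENNReal.ofReal_mul hC0.le]
    refine ENNReal.ofReal_le_ofReal ((osc_le_of_holder hα hb hH0 (fun x y => ?_) I).trans ?_)
    · rcases eq_or_ne x y with rfl | hxy
      · simp only [sub_self, norm_zero]
        positivity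
      have h : ENNReal.ofReal (‖b x - b y‖ / dist x y ^ α) ≤ holderSeminorm α b :=
        le_iSup_of_le x (le_iSup_of_le y (le_iSup_of_le hxy le_rfl))
      have hr : 0 < dist x y := dist_pos.2 hxy
      rw [ENNReal.ofReal_le_iff_le_toReal htop, div_le_iff₀ (by positivity)] at h
      exact h
    · gcongr
      linarith
  · set S := ⨆ I : Cube d, ENNReal.ofReal
      ((I.side ^ α)⁻¹ * (volume I.carrier).toReal⁻¹ * ∫ x in I.carrier, ‖b x - cubeAvg b I‖) with hS
    by_cases htop : S = ∞
    · rw [htop, ENNReal.mul_top hCpos]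
      exact le_top
    have hM0 : 0 ≤ S.toReal := ENNReal.toReal_nonneg
    refine iSup_le fun x => iSup_le fun y => iSup_le fun hxy => ?_
    rw [← ENNReal.ofReal_toReal htop, ← ENNReal.ofReal_mul hC0.le]
    refine ENNReal.ofReal_le_ofReal ?_
    have hr : 0 < dist x y := dist_pos.2 hxy
    rw [div_le_iff₀ (by positivity)]
    refine (holder_of_osc_le hα hb hM0 (fun I => ?_) hxy).trans ?_
    · have h := le_iSup (fun I : Cube d => ENNReal.ofReal
        ((I.side ^ α)⁻¹ * (volume I.carrier).toReal⁻¹ *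
          ∫ x in I.carrier, ‖b x - cubeAvg b I‖)) I
      have hs := I.side_pos
      rw [ENNReal.ofReal_le_iff_le_toReal htop, mul_assoc, I.toReal_volume,
        inv_mul_le_iff₀ (by positivity)] at h
      linarith
    · gcongr
      linarith
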